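/- arXiv:2105.07306 — 7 statements merged into one kernel-verified Lean document; each statement's English description precedes it below -/
import Mathlib

section
/- Let G be a group acting by isometries on two proper metric spaces Y and X, and suppose the action of G on Y is cocompact, i.e. there exists a compact set K ⊆ Y such that the translates g • K (g ∈ G) cover Y. Let f : Y → X be a continuous G-equivariant map (f(g • a) = g • f(a) for all g ∈ G, a ∈ Y) such that the preimage under f of every compact subset of X is compact. Then for every r > 0 there exists R > 0 such that for all a, b ∈ Y, if dist(f(a), f(b)) ≤ r then dist(a, b) ≤ R. -/
/-!
Let `f a` and `f b` be at distance at most `r`. By equivariance and invariance of both metrics, `a`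
may be translated into `K`. Then `f a` and `f b` both lie in the closed `r`-thickening of the
bounded set `f '' K`, so `a` and `b` lie in its preimage, which does not depend on `a` and `b`.
Closures of bounded sets in the proper space `X` are compact, so this preimage is bounded.
-/

open Pointwise

open Bornology

theorem isBounded_preimage_of_forall_isCompact {Y X : Type*} [Bornology Y] [PseudoMetricSpace X]
    [ProperSpace X] {f : Y → X} (hf : ∀ s : Set X, IsCompact s → IsBounded (f ⁻¹' s))
    {s : Set X} (hs : IsBounded s) : IsBounded (f ⁻¹' s) :=
  (hf _ hs.isCompact_closure).subset (Set.preimage_mono subset_closure)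

theorem exists_pos_forall_mem_dist_le_of_isBounded_preimage {Y X : Type*} [PseudoMetricSpace Y]
    [PseudoMetricSpace X] {f : Y → X} (hf : ∀ s : Set X, IsBounded s → IsBounded (f ⁻¹' s))
    {K : Set Y} (hK : IsBounded (f '' K)) (r : ℝ) :
    ∃ R : ℝ, 0 < R ∧ ∀ a ∈ K, ∀ b : Y, dist (f a) (f b) ≤ r → dist a b ≤ R := by
  have hbounded : IsBounded (f ⁻¹' Metric.cthickening r (f '' K)) := hf _ hK.cthickening
  obtain ⟨R, hR, hdist⟩ := (Metric.isBounded_iff_exists_ge 1).mp hbounded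
  refine ⟨R, one_pos.trans_le hR, fun a ha b hab ↦ ?_⟩
  have hfa : f a ∈ f '' K := Set.mem_image_of_mem f ha
  have ha' : f a ∈ Metric.cthickening r (f '' K) := Metric.self_subset_cthickening _ hfa
  have hb' : f b ∈ Metric.cthickening r (f '' K) :=
    Metric.mem_cthickening_of_dist_le _ _ _ _ hfa (by rwa [dist_comm])
  exact hdist ha' hb'

theorem dist_le_of_equivariant_of_forall_mem_dist_le {G Y X : Type*} [Group G]
    [PseudoMetricSpace Y] [PseudoMetricSpace X] [MulAction G Y] [SMul G X]
    [IsIsometricSMul G Y] [IsIsometricSMul G X] {f : Y → X}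
    (hequiv : ∀ (g : G) (a : Y), f (g • a) = g • f a)
    {K : Set Y} (hcover : ∀ y : Y, ∃ g : G, y ∈ g • K) {r R : ℝ}
    (hK : ∀ a ∈ K, ∀ b : Y, dist (f a) (f b) ≤ r → dist a b ≤ R)
    {a b : Y} (hab : dist (f a) (f b) ≤ r) : dist a b ≤ R := by
  obtain ⟨g, hg⟩ := hcover a
  have hmem : g⁻¹ • a ∈ K := Set.mem_smul_set_iff_inv_smul_mem.mp hg
  have hle : dist (f (g⁻¹ • a)) (f (g⁻¹ • b)) ≤ r := by rwa [hequiv, hequiv, dist_smul]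
  simpa only [dist_smul] using hK _ hmem _ hle

theorem stmt0_general {G Y X : Type*} [Group G] [PseudoMetricSpace Y] [PseudoMetricSpace X]
    [MulAction G Y] [SMul G X]
    (hisomY : ∀ (g : G) (a b : Y), dist (g • a) (g • b) = dist a b)
    (hisomX : ∀ (g : G) (a b : X), dist (g • a) (g • b) = dist a b)
    (f : Y → X) (hcobounded : ∃ K : Set Y, IsBounded (f '' K) ∧ ∀ y : Y, ∃ g : G, y ∈ g • K)
    (hequiv : ∀ (g : G) (a : Y), f (g • a) = g • f a)
    (hproper : ∀ s : Set X, IsBounded s → IsBounded (f ⁻¹' s)) (r : ℝ) :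
    ∃ R : ℝ, 0 < R ∧ ∀ a b : Y, dist (f a) (f b) ≤ r → dist a b ≤ R := by
  have : IsIsometricSMul G Y := ⟨fun g ↦ Isometry.of_dist_eq (hisomY g)⟩
  have : IsIsometricSMul G X := ⟨fun g ↦ Isometry.of_dist_eq (hisomX g)⟩
  obtain ⟨K, hK, hcover⟩ := hcobounded
  obtain ⟨R, hR, hdist⟩ := exists_pos_forall_mem_dist_le_of_isBounded_preimage hproper hK r
  exact ⟨R, hR, fun _ _ ↦ dist_le_of_equivariant_of_forall_mem_dist_le hequiv hcover hdist⟩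

/-- If a group `G` acts by isometries on proper metric spaces `Y` and `X`, the action on `Y`
is cocompact, and `f : Y → X` is a continuous `G`-equivariant map such that preimages of
compact sets are compact, then points whose images are at distance `≤ r` are at uniformly
bounded distance. -/
theorem stmt0 {G Y X : Type*} [Group G] [MetricSpace Y] [MetricSpace X]
    [ProperSpace Y] [ProperSpace X] [MulAction G Y] [MulAction G X]
    (hisomY : ∀ (g : G) (a b : Y), dist (g • a) (g • b) = dist a b)
    (hisomX : ∀ (g : G) (a b : X), dist (g • a) (g • b) = dist a b)
    (hcocompact : ∃ K : Set Y, IsCompact K ∧ ∀ y : Y, ∃ g : G, y ∈ g • K)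
    (f : Y → X) (hf : Continuous f)
    (hequiv : ∀ (g : G) (a : Y), f (g • a) = g • f a)
    (hproper : ∀ s : Set X, IsCompact s → IsCompact (f ⁻¹' s)) :
    ∀ r : ℝ, 0 < r → ∃ R : ℝ, 0 < R ∧
      ∀ a b : Y, dist (f a) (f b) ≤ r → dist a b ≤ R := by
  obtain ⟨K, hK, hcover⟩ := hcocompact
  exact fun r _ ↦ stmt0_general hisomY hisomX f ⟨K, (hK.image hf).isBounded, hcover⟩ hequiv
    (fun _ ↦ isBounded_preimage_of_forall_isCompact fun s hs ↦ (hproper s hs).isBounded) r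
end

section
/- Let X be a proper metric space that is unbounded and geodesic, meaning that for all a, b ∈ X there exists a map γ : ℝ → X with γ(0) = a, γ(dist(a,b)) = b, and dist(γ(s), γ(u)) = |s − u| for all s, u ∈ [0, dist(a,b)]. Then for every p ∈ X there exists a geodesic ray from p, i.e. a map σ : ℝ → X with σ(0) = p and dist(σ(s), σ(u)) = |s − u| for all s, u ≥ 0. -/
/-!
Geodesic segments `γ n` from `p` with lengths tending to infinity have, at each time `t ≥ 0`,
their values `γ n t` eventually on the sphere of radius `t` around `p`, which lies in a compact
ball. They therefore converge along any ultrafilter finer than `atTop`, and the pointwise limit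
is a ray because distances pass to the limit. The ultrafilter replaces the diagonal subsequence
of the Arzelà–Ascoli argument.
-/

open Filter Topology
open scoped NNReal

section

variable {X : Type*} [PseudoMetricSpace X]

theorem exists_mem_lt_dist_of_not_isBounded {S : Set X} (hS : ¬ Bornology.IsBounded S)
    (p : X) (r : ℝ) : ∃ x ∈ S, r < dist p x := by
  contrapose! hS
  exact Metric.isBounded_closedBall.subset fun x hx => Metric.mem_closedBall'.2 (hS x hx)

variable [ProperSpace X]

theorem exists_tendsto_of_eventually_dist_le {ι : Type*} (U : Ultrafilter ι) {f : ι → X} {p : X}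
    {r : ℝ} (hf : ∀ᶠ i in U, dist (f i) p ≤ r) : ∃ x, Tendsto f U (𝓝 x) := by
  obtain ⟨x, -, hx⟩ := (isCompact_closedBall p r).ultrafilter_le_nhds' (U.map f) hf
  exact ⟨x, hx⟩

theorem exists_isometry_of_eventually_dist_eq {Y ι : Type*} [PseudoMetricSpace Y] {l : Filter ι}
    [l.NeBot] {f : ι → Y → X} {y₀ : Y} {p : X} (hbase : ∀ᶠ i in l, f i y₀ = p)
    (hdist : ∀ y z, ∀ᶠ i in l, dist (f i y) (f i z) = dist y z) :
    ∃ g : Y → X, Isometry g ∧ g y₀ = p := by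
  classical
  let U := Ultrafilter.of l
  have hU : (U : Filter ι) ≤ l := Ultrafilter.of_le l
  have hbounded (y : Y) : ∀ᶠ i in U, dist (f i y) p ≤ dist y y₀ := by
    filter_upwards [hU hbase, hU (hdist y y₀)] with i hi hiy
    rw [← hiy, hi]
  choose g hg using fun y => exists_tendsto_of_eventually_dist_le U (hbounded y)
  -- Limits are unique only up to inseparability, so the value at `y₀` has to be prescribed.
  have hlim (y : Y) : Tendsto (f · y) U (𝓝 (Function.update g y₀ p y)) := by
    obtain rfl | hy := eq_or_ne y y₀
    · rw [Function.update_self]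
      exact tendsto_nhds_of_eventually_eq (hU hbase)
    · rw [Function.update_of_ne hy]
      exact hg y
  refine ⟨Function.update g y₀ p, .of_dist_eq fun y z => ?_, Function.update_self ..⟩
  exact tendsto_nhds_unique ((hlim y).dist (hlim z))
    (tendsto_nhds_of_eventually_eq (hU (hdist y z)))

theorem exists_ray_of_forall_exists_segment {p : X}
    (h : ∀ n : ℕ, ∃ γ : ℝ → X, γ 0 = p ∧
      ∀ s ∈ Set.Icc (0 : ℝ) n, ∀ u ∈ Set.Icc (0 : ℝ) n, dist (γ s) (γ u) = |s - u|) :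
    ∃ σ : ℝ → X, σ 0 = p ∧ ∀ s u : ℝ, 0 ≤ s → 0 ≤ u → dist (σ s) (σ u) = |s - u| := by
  choose γ hγ₀ hγ using h
  have hdist (s u : ℝ≥0) : ∀ᶠ n in atTop, dist (γ n s) (γ n u) = dist s u := by
    filter_upwards [tendsto_natCast_atTop_atTop.eventually_ge_atTop (s : ℝ),
      tendsto_natCast_atTop_atTop.eventually_ge_atTop (u : ℝ)] with n hs hu
    exact hγ n s ⟨s.coe_nonneg, hs⟩ u ⟨u.coe_nonneg, hu⟩
  obtain ⟨g, hg, hg₀⟩ := exists_isometry_of_eventually_dist_eq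
    (f := fun n (t : ℝ≥0) => γ n t) (y₀ := 0) (.of_forall hγ₀) hdist
  refine ⟨g ∘ Real.toNNReal, by simp [hg₀], fun s u hs hu => ?_⟩
  rw [Function.comp_apply, Function.comp_apply, hg.dist_eq, NNReal.dist_eq, Real.coe_toNNReal s hs,
    Real.coe_toNNReal u hu]

theorem stmt1_general (hX : ¬ Bornology.IsBounded (Set.univ : Set X)) {p : X}
    (hp : ∀ b : X, ∃ γ : ℝ → X, γ 0 = p ∧ γ (dist p b) = b ∧
      ∀ s ∈ Set.Icc (0 : ℝ) (dist p b), ∀ u ∈ Set.Icc (0 : ℝ) (dist p b),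
        dist (γ s) (γ u) = |s - u|) :
    ∃ σ : ℝ → X, σ 0 = p ∧ ∀ s u : ℝ, 0 ≤ s → 0 ≤ u → dist (σ s) (σ u) = |s - u| := by
  refine exists_ray_of_forall_exists_segment fun n => ?_
  obtain ⟨b, -, hb⟩ := exists_mem_lt_dist_of_not_isBounded hX p n
  obtain ⟨γ, hγ₀, -, hγ⟩ := hp b
  have hsub : Set.Icc (0 : ℝ) n ⊆ Set.Icc 0 (dist p b) := Set.Icc_subset_Icc_right hb.le
  exact ⟨γ, hγ₀, fun s hs u hu => hγ s (hsub hs) u (hsub hu)⟩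

end

/-- In a proper, unbounded, geodesic metric space, every point is the starting point of a
geodesic ray. -/
theorem stmt1 {X : Type*} [MetricSpace X] [ProperSpace X]
    (hunbounded : ¬ Bornology.IsBounded (Set.univ : Set X))
    (hgeodesic : ∀ a b : X, ∃ γ : ℝ → X, γ 0 = a ∧ γ (dist a b) = b ∧
      ∀ s ∈ Set.Icc (0 : ℝ) (dist a b), ∀ u ∈ Set.Icc (0 : ℝ) (dist a b),
        dist (γ s) (γ u) = |s - u|) :
    ∀ p : X, ∃ σ : ℝ → X, σ 0 = p ∧
      ∀ s u : ℝ, 0 ≤ s → 0 ≤ u → dist (σ s) (σ u) = |s - u| :=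
  fun p => stmt1_general hunbounded (hgeodesic p)
end

section
/- Let X be a proper, noncompact, geodesic metric space, and let a group G act on X by isometries such that the action is cocompact, i.e. there exists a compact set K ⊆ X such that the translates g • K (g ∈ G) cover X. Then X contains a geodesic line: there exists γ : ℝ → X such that dist(γ(s), γ(u)) = |s − u| for all s, u ∈ ℝ. -/
open Pointwise

/-!
A proper noncompact space is unbounded, so it contains arbitrarily long geodesic segments. Center
each segment at time `0` and move its center into the compact set `K` by an isometry of the action.
The `n`-th segment then has, at each fixed time `t`, a value within `|t|` of `K` once `n` is large.
Bounded sets are relatively compact, so along an ultrafilter the segments converge pointwise, and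
the limit is a line.
-/

open Bornology Filter Set Topology

section Limits

variable {ι X Y : Type*} [PseudoMetricSpace X] [ProperSpace X] [PseudoMetricSpace Y]

lemma exists_tendsto_of_eventually_mem_isBounded {U : Ultrafilter ι} {f : ι → X} {B : Set X}
    (hB : IsBounded B) (hf : ∀ᶠ i in U, f i ∈ B) : ∃ x, Tendsto f U (𝓝 x) := by
  obtain ⟨x, -, hx⟩ := hB.isCompact_closure.ultrafilter_le_nhds (U.map f)
    (le_principal_iff.mpr (hf.mono fun _ hi => subset_closure hi))
  exact ⟨x, hx⟩

lemma exists_isometry_of_tendsto_dist {l : Filter ι} [l.NeBot] {f : ι → Y → X} {B : Set X} {o : Y}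
    (hB : IsBounded B) (ho : ∀ᶠ i in l, f i o ∈ B)
    (hf : ∀ y z, Tendsto (fun i => dist (f i y) (f i z)) l (𝓝 (dist y z))) :
    ∃ φ : Y → X, Isometry φ := by
  have hUl : (Ultrafilter.of l : Filter ι) ≤ l := Ultrafilter.of_le l
  have hlim (y : Y) : ∃ x, Tendsto (fun i => f i y) (Ultrafilter.of l) (𝓝 x) := by
    refine exists_tendsto_of_eventually_mem_isBounded (hB.cthickening (δ := dist y o + 1)) ?_
    have hdist : ∀ᶠ i in l, dist (f i y) (f i o) < dist y o + 1 :=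
      (hf y o).eventually_lt_const (lt_add_one _)
    filter_upwards [hUl hdist, hUl ho] with i hi hio
    exact Metric.mem_cthickening_of_dist_le _ _ _ _ hio hi.le
  choose φ hφ using hlim
  exact ⟨φ, Isometry.of_dist_eq fun y z =>
    tendsto_nhds_unique ((hφ y).dist (hφ z)) ((hf y z).mono_left hUl)⟩

end Limits

section Geodesics

variable {X : Type*} [PseudoMetricSpace X]

/-- The path `γ` is a unit-speed geodesic on the set `I` of times, in the global, distance-realizing
sense. As for `ContinuousOn`, the values of `γ` outside `I` are irrelevant. -/
def IsGeodesicOn (γ : ℝ → X) (I : Set ℝ) : Prop :=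
  ∀ s ∈ I, ∀ u ∈ I, dist (γ s) (γ u) = |s - u|

lemma exists_isGeodesicOn_Icc_zero [ProperSpace X] [NoncompactSpace X]
    (hX : ∀ a b : X, ∃ γ : ℝ → X, IsGeodesicOn γ (Icc 0 (dist a b))) (L : ℝ) :
    ∃ γ : ℝ → X, IsGeodesicOn γ (Icc 0 L) := by
  obtain ⟨p⟩ : Nonempty X := (cocompact X).nonempty_of_neBot
  obtain ⟨q, hq⟩ := ((tendsto_dist_left_cocompact_atTop p).eventually_ge_atTop L).exists
  obtain ⟨γ, hγ⟩ := hX p q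
  have hsub : Icc 0 L ⊆ Icc 0 (dist p q) := Icc_subset_Icc_right hq
  exact ⟨γ, fun s hs u hu => hγ s (hsub hs) u (hsub hu)⟩

lemma IsGeodesicOn.exists_centered {γ : ℝ → X} {r : ℝ} {K : Set X}
    (hγ : IsGeodesicOn γ (Icc 0 (2 * r))) (hK : ∃ f : X → X, Isometry f ∧ f (γ r) ∈ K) :
    ∃ σ : ℝ → X, σ 0 ∈ K ∧ IsGeodesicOn σ (Icc (-r) r) := by
  obtain ⟨f, hf, hfK⟩ := hK
  have hshift {t : ℝ} (ht : t ∈ Icc (-r) r) : t + r ∈ Icc 0 (2 * r) :=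
    ⟨by linarith [ht.1], by linarith [ht.2]⟩
  refine ⟨fun t => f (γ (t + r)), by simpa only [zero_add] using hfK, fun s hs u hu => ?_⟩
  rw [hf.dist_eq, hγ _ (hshift hs) _ (hshift hu), add_sub_add_right_eq_sub]

theorem stmt2_general [ProperSpace X] {K : Set X}
    (hlong : ∀ L : ℝ, ∃ γ : ℝ → X, IsGeodesicOn γ (Icc 0 L)) (hKb : IsBounded K)
    (hK : ∀ x : X, ∃ f : X → X, Isometry f ∧ f x ∈ K) :
    ∃ γ : ℝ → X, Isometry γ := by
  have hcentered (n : ℕ) : ∃ σ : ℝ → X, σ 0 ∈ K ∧ IsGeodesicOn σ (Icc (-(n : ℝ)) n) :=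
    let ⟨γ, hγ⟩ := hlong (2 * n)
    hγ.exists_centered (hK (γ n))
  choose σ hσK hσ using hcentered
  have hmem (t : ℝ) : ∀ᶠ n : ℕ in atTop, t ∈ Icc (-(n : ℝ)) n :=
    (tendsto_natCast_atTop_atTop.eventually_ge_atTop |t|).mono fun _ => abs_le.mp
  refine exists_isometry_of_tendsto_dist (l := atTop) hKb (Eventually.of_forall hσK) fun s u => ?_
  refine tendsto_const_nhds.congr' ?_
  filter_upwards [hmem s, hmem u] with n hs hu
  rw [hσ n s hs u hu, Real.dist_eq]

end Geodesics

/-- A proper, noncompact, geodesic metric space admitting a cocompact isometric group action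
contains a geodesic line. -/
theorem stmt2 {G X : Type*} [Group G] [MetricSpace X] [ProperSpace X]
    (hnoncompact : ¬ CompactSpace X)
    (hgeodesic : ∀ a b : X, ∃ γ : ℝ → X, γ 0 = a ∧ γ (dist a b) = b ∧
      ∀ s ∈ Set.Icc (0 : ℝ) (dist a b), ∀ u ∈ Set.Icc (0 : ℝ) (dist a b),
        dist (γ s) (γ u) = |s - u|)
    [MulAction G X]
    (hisom : ∀ (g : G) (a b : X), dist (g • a) (g • b) = dist a b)
    (hcocompact : ∃ K : Set X, IsCompact K ∧ ∀ x : X, ∃ g : G, x ∈ g • K) :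
    ∃ γ : ℝ → X, ∀ s u : ℝ, dist (γ s) (γ u) = |s - u| := by
  obtain ⟨K, hKc, hcover⟩ := hcocompact
  have : NoncompactSpace X := not_compactSpace_iff.mp hnoncompact
  have hlong := exists_isGeodesicOn_Icc_zero fun a b => (hgeodesic a b).imp fun _ hγ => hγ.2.2
  have hK (x : X) : ∃ f : X → X, Isometry f ∧ f x ∈ K :=
    let ⟨g, hg⟩ := hcover x
    ⟨(g⁻¹ • ·), Isometry.of_dist_eq (hisom g⁻¹), mem_smul_set_iff_inv_smul_mem.mp hg⟩
  exact (stmt2_general hlong hKc.isBounded hK).imp fun _ hγ => hγ.dist_eq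
end

section
/- Let X be a metric space, p, x ∈ X, t = dist(p, x), and let η : ℝ → X be a unit-speed minimizing geodesic from p to x (η(0) = p, η(t) = x, and dist(η(s), η(u)) = |s − u| for all s, u ∈ [0, t]). Let L, ℓ be real numbers with 0 < ℓ < L. Suppose s ∈ X satisfies dist(s, x) = 4L + ℓ and dist(s, η(u)) ≤ L + ℓ for some u ∈ [0, t]. Then every z ∈ X with dist(p, z) ≥ t satisfies dist(s, z) ≥ 2L − ℓ; in particular dist(s, z) > L. -/
section Betweenness

variable {X : Type*} [PseudoMetricSpace X] {p q x s z : X}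

-- Geometrically: `x` is a nearest point to `q` outside the open ball of radius `dist p x` at `p`.
theorem dist_le_dist_of_dist_add_dist_eq (hq : dist p q + dist q x = dist p x)
    (hz : dist p x ≤ dist p z) : dist q x ≤ dist q z := by
  have through_q : dist p q + dist q x ≤ dist p q + dist q z :=
    hq.trans_le (hz.trans (dist_triangle p q z))
  exact le_of_add_le_add_left through_q

theorem dist_sub_two_mul_dist_le_of_dist_add_dist_eq (hq : dist p q + dist q x = dist p x)
    (hz : dist p x ≤ dist p z) : dist s x - 2 * dist s q ≤ dist s z := by
  rw [sub_le_iff_le_add]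
  calc
    dist s x ≤ dist s q + dist q x := dist_triangle s q x
    _ ≤ dist s q + dist q z := by gcongr; exact dist_le_dist_of_dist_add_dist_eq hq hz
    _ ≤ dist s q + (dist s q + dist s z) := by gcongr; exact dist_triangle_left q z s
    _ = dist s z + 2 * dist s q := by ring

theorem dist_add_dist_eq_of_dist_eq_abs_sub {η : ℝ → X} {a b u : ℝ}
    (hη : ∀ r ∈ Set.Icc a b, ∀ r' ∈ Set.Icc a b, dist (η r) (η r') = |r - r'|)
    (hu : u ∈ Set.Icc a b) : dist (η a) (η u) + dist (η u) (η b) = dist (η a) (η b) := by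
  have hab : a ≤ b := hu.1.trans hu.2
  have ha : a ∈ Set.Icc a b := Set.left_mem_Icc.2 hab
  have hb : b ∈ Set.Icc a b := Set.right_mem_Icc.2 hab
  rw [hη a ha u hu, hη u hu b hb, hη a ha b hb, abs_sub_comm a u, abs_sub_comm u b,
    abs_sub_comm a b, abs_of_nonneg (sub_nonneg.2 hu.1), abs_of_nonneg (sub_nonneg.2 hu.2),
    abs_of_nonneg (sub_nonneg.2 hab), sub_add_sub_cancel']

end Betweenness

theorem stmt3_general {X : Type*} [PseudoMetricSpace X] {p q x s z : X} {L ℓ : ℝ}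
    (hq : dist p q + dist q x = dist p x) (hℓL : ℓ < L) (hsx : 4 * L + ℓ ≤ dist s x)
    (hsq : dist s q ≤ L + ℓ) (hz : dist p x ≤ dist p z) :
    2 * L - ℓ ≤ dist s z ∧ L < dist s z := by
  have hsz : 2 * L - ℓ ≤ dist s z := calc
    2 * L - ℓ = 4 * L + ℓ - 2 * (L + ℓ) := by ring
    _ ≤ dist s x - 2 * dist s q := by gcongr
    _ ≤ dist s z := dist_sub_two_mul_dist_le_of_dist_add_dist_eq hq hz
  exact ⟨hsz, by linarith⟩

/-- If `η` is a unit-speed minimizing geodesic from `p` to `x` with `t = dist p x`,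
`0 < ℓ < L`, and `s` satisfies `dist s x = 4L + ℓ` and `dist s (η u) ≤ L + ℓ` for some
`u ∈ [0, t]`, then every `z` with `dist p z ≥ t` satisfies `dist s z ≥ 2L - ℓ`, in
particular `dist s z > L`. -/
theorem stmt3 {X : Type*} [MetricSpace X] (p x : X) (t : ℝ) (ht : t = dist p x)
    (η : ℝ → X) (hη0 : η 0 = p) (hηt : η t = x)
    (hηgeo : ∀ s ∈ Set.Icc (0 : ℝ) t, ∀ u ∈ Set.Icc (0 : ℝ) t,
      dist (η s) (η u) = |s - u|)
    (L ℓ : ℝ) (hℓ : 0 < ℓ) (hℓL : ℓ < L)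
    (s : X) (hsx : dist s x = 4 * L + ℓ)
    (hsη : ∃ u ∈ Set.Icc (0 : ℝ) t, dist s (η u) ≤ L + ℓ) :
    ∀ z : X, dist p z ≥ t → dist s z ≥ 2 * L - ℓ ∧ dist s z > L := by
  subst hη0 hηt
  obtain ⟨u, hu, hsu⟩ := hsη
  exact fun z hz ↦ stmt3_general (dist_add_dist_eq_of_dist_eq_abs_sub hηgeo hu) hℓL hsx.ge hsu
    (ht.symm.trans_le hz)
end

section
/- Let X be a metric space, p, x, y ∈ X with dist(p, x) = dist(p, y) = t, and let η : ℝ → X be a unit-speed minimizing geodesic from p to x and η' : ℝ → X a unit-speed minimizing geodesic from p to y. Let L, ℓ be real numbers with 0 < ℓ < L, and assume dist(x, y) ≥ 20L. Then there is no u' ∈ [0, t] such that the point s = η'(u') satisfies both dist(s, x) = 4L + ℓ and dist(s, η(u)) ≤ L + ℓ for some u ∈ [0, t]. -/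
/-!
A point `s` of a minimizing geodesic from `p` to `y`, where `y` is no farther from `p` than `x`, is
at least as close to `y` as to `x`, so `dist x y ≤ 2 * dist s x`. On the sphere of radius `4L + ℓ`
about `x` this would give `20L ≤ 8L + 2ℓ < 10L`.
-/

section

variable {X : Type*} [PseudoMetricSpace X]

theorem dist_le_two_mul_dist_of_dist_add_dist_le {p s x y : X}
    (h : dist p s + dist s y ≤ dist p x) : dist x y ≤ 2 * dist s x := by
  have closer : dist s y ≤ dist s x :=
    le_of_add_le_add_left (h.trans (dist_triangle p s x))
  calc
    dist x y ≤ dist s x + dist s y := dist_triangle_left x y s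
    _ ≤ dist s x + dist s x := by gcongr
    _ = 2 * dist s x := (two_mul _).symm

/-- `γ` restricted to `[a, b]` is a unit-speed minimizing geodesic from `p` to `q`. Its values
outside `[a, b]` are unconstrained, so that paths are functions on all of `ℝ`. -/
structure IsUnitSpeedMinimizingGeodesic (γ : ℝ → X) (a b : ℝ) (p q : X) : Prop where
  source : γ a = p
  target : γ b = q
  dist_eq : ∀ s ∈ Set.Icc a b, ∀ u ∈ Set.Icc a b, dist (γ s) (γ u) = |s - u|

theorem IsUnitSpeedMinimizingGeodesic.dist_add_dist_eq {γ : ℝ → X} {a b u : ℝ} {p q : X}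
    (hγ : IsUnitSpeedMinimizingGeodesic γ a b p q) (hu : u ∈ Set.Icc a b) :
    dist p (γ u) + dist (γ u) q = dist p q := by
  have hab : a ≤ b := hu.1.trans hu.2
  have ha : a ∈ Set.Icc a b := Set.left_mem_Icc.2 hab
  have hb : b ∈ Set.Icc a b := Set.right_mem_Icc.2 hab
  rw [← hγ.source, ← hγ.target, hγ.dist_eq a ha u hu, hγ.dist_eq u hu b hb, hγ.dist_eq a ha b hb,
    abs_sub_comm a u, abs_sub_comm u b, abs_sub_comm a b, abs_of_nonneg (sub_nonneg.2 hu.1),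
    abs_of_nonneg (sub_nonneg.2 hu.2), abs_of_nonneg (sub_nonneg.2 hab)]
  ring

theorem stmt4_general {γ : ℝ → X} {a b u : ℝ} {p x y : X}
    (hγ : IsUnitSpeedMinimizingGeodesic γ a b p y) (hxy : dist p y ≤ dist p x)
    (hu : u ∈ Set.Icc a b) : dist x y ≤ 2 * dist (γ u) x :=
  dist_le_two_mul_dist_of_dist_add_dist_le ((hγ.dist_add_dist_eq hu).trans_le hxy)

end

/-- If `η`, `η'` are unit-speed minimizing geodesics from `p` to `x` and from `p` to `y`
(with `t = dist p x = dist p y`), `0 < ℓ < L`, and `dist x y ≥ 20L`, then no point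
`s = η' u'` with `u' ∈ [0, t]` can satisfy both `dist s x = 4L + ℓ` and
`dist s (η u) ≤ L + ℓ` for some `u ∈ [0, t]`. -/
theorem stmt4 {X : Type*} [MetricSpace X] (p x y : X) (t : ℝ)
    (htx : dist p x = t) (hty : dist p y = t)
    (η η' : ℝ → X)
    (hη0 : η 0 = p) (hηt : η t = x)
    (hηgeo : ∀ s ∈ Set.Icc (0 : ℝ) t, ∀ u ∈ Set.Icc (0 : ℝ) t,
      dist (η s) (η u) = |s - u|)
    (hη'0 : η' 0 = p) (hη't : η' t = y)
    (hη'geo : ∀ s ∈ Set.Icc (0 : ℝ) t, ∀ u ∈ Set.Icc (0 : ℝ) t,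
      dist (η' s) (η' u) = |s - u|)
    (L ℓ : ℝ) (hℓ : 0 < ℓ) (hℓL : ℓ < L)
    (hxy : dist x y ≥ 20 * L) :
    ¬ ∃ u' ∈ Set.Icc (0 : ℝ) t, dist (η' u') x = 4 * L + ℓ ∧
        ∃ u ∈ Set.Icc (0 : ℝ) t, dist (η' u') (η u) ≤ L + ℓ := by
  rintro ⟨u', hu', hs, -⟩
  linarith [stmt4_general ⟨hη'0, hη't, hη'geo⟩ (hty.trans htx.symm).le hu']
end

section
/- Let X be a metric space, p, x, y ∈ X with dist(p, x) = dist(p, y) = t, and let η : ℝ → X be a unit-speed minimizing geodesic from p to x and η' : ℝ → X a unit-speed minimizing geodesic from p to y. Let L, ℓ be real numbers with 0 < ℓ < L, and assume dist(x, y) ≥ 20L. If s ∈ X satisfies dist(s, x) = 4L + ℓ and dist(s, η(u)) ≤ L + ℓ for some u ∈ [0, t], then dist(s, η'(u')) > L for every u' ∈ [0, t]. -/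
/-!
For `q` on a minimizing geodesic from `p` to `y`, both `dist x q ≥ dist p x - dist p q` and
`dist x q ≥ dist x y - dist q y`. Summing, if `dist p x = dist p y` then `2 * dist x q ≥ dist x y`:
the geodesic stays at distance at least `dist x y / 2 ≥ 10L` from `x`, whereas `s` is at distance
less than `5L` from `x`.
-/

section

open Set

variable {X : Type*} [PseudoMetricSpace X] {p q s x y : X} {t u L : ℝ} {γ : ℝ → X}

theorem dist_add_dist_le_two_mul_dist_add_dist (hq : dist p q + dist q y = dist p y) (x : X) :
    dist p x + dist x y ≤ 2 * dist x q + dist p y :=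
  calc
    dist p x + dist x y ≤ (dist p q + dist x q) + (dist x q + dist q y) :=
      add_le_add (dist_triangle_right p x q) (dist_triangle x q y)
    _ = 2 * dist x q + (dist p q + dist q y) := by ring
    _ = 2 * dist x q + dist p y := by rw [hq]

/-- `γ` restricts on `[0, t]` to a unit-speed minimizing geodesic from `p` to `y`; its values
outside `[0, t]` are arbitrary. -/
structure IsMinimizingGeodesic (γ : ℝ → X) (p y : X) (t : ℝ) : Prop where
  map_zero : γ 0 = p
  map_length : γ t = y
  dist_eq : ∀ a ∈ Icc 0 t, ∀ b ∈ Icc 0 t, dist (γ a) (γ b) = |a - b|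

namespace IsMinimizingGeodesic

theorem dist_source (hγ : IsMinimizingGeodesic γ p y t) (hu : u ∈ Icc 0 t) :
    dist p (γ u) = u := by
  have h0 : (0 : ℝ) ∈ Icc 0 t := left_mem_Icc.2 (hu.1.trans hu.2)
  rw [← hγ.map_zero, hγ.dist_eq 0 h0 u hu, zero_sub, abs_neg, abs_of_nonneg hu.1]

theorem dist_target (hγ : IsMinimizingGeodesic γ p y t) (hu : u ∈ Icc 0 t) :
    dist (γ u) y = t - u := by
  have ht : t ∈ Icc 0 t := right_mem_Icc.2 (hu.1.trans hu.2)
  rw [← hγ.map_length, hγ.dist_eq u hu t ht, abs_sub_comm, abs_of_nonneg (sub_nonneg.2 hu.2)]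

theorem dist_source_target (hγ : IsMinimizingGeodesic γ p y t) (ht : 0 ≤ t) : dist p y = t := by
  simpa only [hγ.map_length] using hγ.dist_source (right_mem_Icc.2 ht)

theorem dist_add_dist (hγ : IsMinimizingGeodesic γ p y t) (hu : u ∈ Icc 0 t) :
    dist p (γ u) + dist (γ u) y = dist p y := by
  rw [hγ.dist_source hu, hγ.dist_target hu, hγ.dist_source_target (hu.1.trans hu.2),
    add_sub_cancel]

theorem dist_le_two_mul_dist (hγ : IsMinimizingGeodesic γ p y t) (hx : t ≤ dist p x)
    (hu : u ∈ Icc 0 t) : dist x y ≤ 2 * dist x (γ u) := by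
  have hsum := dist_add_dist_le_two_mul_dist_add_dist (hγ.dist_add_dist hu) x
  have hpy : dist p y = t := hγ.dist_source_target (hu.1.trans hu.2)
  linarith

end IsMinimizingGeodesic

theorem stmt5_general (hγ : IsMinimizingGeodesic γ p y t) (hx : t ≤ dist p x)
    (hxy : 20 * L ≤ dist x y) (hsx : dist s x < 5 * L) (hu : u ∈ Icc 0 t) :
    5 * L < dist s (γ u) := by
  have hxγ : dist x y ≤ 2 * dist x (γ u) := hγ.dist_le_two_mul_dist hx hu
  have htri : dist x (γ u) ≤ dist s x + dist s (γ u) := dist_triangle_left x (γ u) s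
  linarith

end

/-- If `η`, `η'` are unit-speed minimizing geodesics from `p` to `x` and from `p` to `y`
(with `t = dist p x = dist p y`), `0 < ℓ < L`, `dist x y ≥ 20L`, and `s` satisfies
`dist s x = 4L + ℓ` and `dist s (η u) ≤ L + ℓ` for some `u ∈ [0, t]`, then
`dist s (η' u') > L` for every `u' ∈ [0, t]`. -/
theorem stmt5 {X : Type*} [MetricSpace X] (p x y : X) (t : ℝ)
    (htx : dist p x = t) (hty : dist p y = t)
    (η η' : ℝ → X)
    (hη0 : η 0 = p) (hηt : η t = x)
    (hηgeo : ∀ s ∈ Set.Icc (0 : ℝ) t, ∀ u ∈ Set.Icc (0 : ℝ) t,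
      dist (η s) (η u) = |s - u|)
    (hη'0 : η' 0 = p) (hη't : η' t = y)
    (hη'geo : ∀ s ∈ Set.Icc (0 : ℝ) t, ∀ u ∈ Set.Icc (0 : ℝ) t,
      dist (η' s) (η' u) = |s - u|)
    (L ℓ : ℝ) (hℓ : 0 < ℓ) (hℓL : ℓ < L)
    (hxy : dist x y ≥ 20 * L)
    (s : X) (hsx : dist s x = 4 * L + ℓ)
    (hsη : ∃ u ∈ Set.Icc (0 : ℝ) t, dist s (η u) ≤ L + ℓ) :
    ∀ u' ∈ Set.Icc (0 : ℝ) t, dist s (η' u') > L := fun _ hu' ↦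
  lt_trans (by linarith)
    (stmt5_general ⟨hη'0, hη't, hη'geo⟩ htx.ge hxy (by linarith) hu')
end

section
/- Let K̃, K, Ñ, N be topological spaces with K̃ path-connected and Ñ simply connected. Let j : K̃ → K, i : K → N, and h : K̃ → Ñ be continuous maps and P : Ñ → N a continuous map with P ∘ h = i ∘ j. Assume i is injective, and assume the following condition: for every path δ : [0,1] → K̃ such that j(δ(0)) = j(δ(1)) and the loop i ∘ j ∘ δ in N is null-homotopic, one has δ(0) = δ(1). Then h is injective. -/
/-!
If `h` and `j` both agree at the endpoints of a path `δ`, then `h ∘ δ` is a loop, and its image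
under `P` is the loop `i ∘ j ∘ δ`. Hence `i ∘ j ∘ δ` is null-homotopic as soon as `P` kills all
loops, and the loop-lifting condition makes the endpoints of `δ` equal.
-/

theorem map_cast_homotopic_refl_of_comp_eq {X Y Z : Type*} [TopologicalSpace X] [TopologicalSpace Y]
    [TopologicalSpace Z] {f : X → Z} {h : X → Y} {P : Y → Z}
    (hf : Continuous f) (hh : Continuous h) (hP : Continuous P)
    (hcomm : ∀ x, P (h x) = f x) {a b : X} (δ : Path a b) (hab : h a = h b) (hfab : f a = f b)
    (hP_loop : ∀ γ : Path (h a) (h a), (γ.map hP).Homotopic (Path.refl (P (h a)))) :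
    ((δ.map hf).cast rfl hfab).Homotopic (Path.refl (f a)) := by
  -- The endpoints of the paths depend on `f`, so `f` is replaced by `P ∘ h` as a whole.
  obtain rfl : (fun x ↦ P (h x)) = f := funext hcomm
  exact hP_loop ((δ.map hh).cast rfl hab)

theorem map_homotopic_refl_of_simplyConnectedSpace {Y Z : Type*} [TopologicalSpace Y]
    [TopologicalSpace Z] [SimplyConnectedSpace Y] {P : Y → Z} (hP : Continuous P) (y : Y)
    (γ : Path y y) : (γ.map hP).Homotopic (Path.refl (P y)) :=
  (SimplyConnectedSpace.paths_homotopic γ (Path.refl y)).map ⟨P, hP⟩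

theorem stmt7_general {Ktil K Ntil N : Type*} [TopologicalSpace Ktil]
    [TopologicalSpace Ntil] [TopologicalSpace N]
    (j : Ktil → K) (i : K → N) (h : Ktil → Ntil) (P : Ntil → N)
    (hij : Continuous fun a ↦ i (j a)) (hh : Continuous h) (hP : Continuous P)
    (hcomm : ∀ a, P (h a) = i (j a))
    (hP_loop : ∀ (y : Ntil) (γ : Path y y), (γ.map hP).Homotopic (Path.refl (P y)))
    (hloop : ∀ (a b : Ktil) (δ : Path a b) (hab : j a = j b),
      ((δ.map hij).cast rfl (by rw [hab])).Homotopic (Path.refl (i (j a))) → a = b)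
    {a b : Ktil} (hjoined : Joined a b) (hj_eq : j a = j b) (hh_eq : h a = h b) :
    a = b :=
  hloop a b hjoined.somePath hj_eq <|
    map_cast_homotopic_refl_of_comp_eq hij hh hP hcomm hjoined.somePath hh_eq (congrArg i hj_eq)
      (hP_loop (h a))

/-- Given continuous maps `j : Ktil → K`, `i : K → N`, `h : Ktil → Ntil`, `P : Ntil → N` with
`P ∘ h = i ∘ j`, `Ktil` path-connected, `Ntil` simply connected, `i` injective, and the
loop-lifting condition (every path `δ` in `Ktil` whose projection `j ∘ δ` is a loop with
`i ∘ j ∘ δ` null-homotopic in `N` is itself a loop), the map `h` is injective. -/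
theorem stmt7 {Ktil K Ntil N : Type*} [TopologicalSpace Ktil] [TopologicalSpace K]
    [TopologicalSpace Ntil] [TopologicalSpace N]
    [PathConnectedSpace Ktil] [SimplyConnectedSpace Ntil]
    (j : Ktil → K) (i : K → N) (h : Ktil → Ntil) (P : Ntil → N)
    (hj : Continuous j) (hi : Continuous i) (hh : Continuous h) (hP : Continuous P)
    (hcomm : ∀ a : Ktil, P (h a) = i (j a))
    (hinj : Function.Injective i)
    (hloop : ∀ (atil btil : Ktil) (δ : Path atil btil) (hab : j atil = j btil),
      ((δ.map (show Continuous (fun a : Ktil => i (j a)) from hi.comp hj)).cast rfl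
          (by rw [hab])).Homotopic (Path.refl (i (j atil))) → atil = btil) :
    Function.Injective h := by
  intro a b hab
  have hj_eq : j a = j b := hinj (by rw [← hcomm, ← hcomm, hab])
  exact stmt7_general j i h P (hi.comp hj) hh hP hcomm
    (map_homotopic_refl_of_simplyConnectedSpace hP) hloop (PathConnectedSpace.joined a b) hj_eq hab
end
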